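/- arXiv:gr-qc/0006083 — 7 statements merged into one kernel-verified Lean document; each statement's English description precedes it below -/
import Mathlib

section
/- Let U : ℝ → ℝ be smooth and nonvanishing on an open interval I, let τ be an antiderivative of U on I, and let a, b, c be real constants. Define A₁(t) = U(t)⁻¹ e^{−a τ(t)}, A₂(t) = U(t)⁻¹ e^{−b τ(t)}, A₃(t) = U(t)⁻¹ e^{−c τ(t)}. Then on I × ℝ³ the vector field Y with components (Y⁰, Y¹, Y², Y³)(t,x,y,z) = (1/U(t), a·x, b·y, c·z) satisfies L_Y g = 2ψ g for the diagonal Bianchi I metric g built from A₁, A₂, A₃, where the conformal factor is ψ(t,x,y,z) = −U'(t)/U(t)². In other words, every Bianchi I metric of this family admits Y as a conformal Killing vector with conformal factor −U'/U². -/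
/-- Partial derivative `∂_a f` on ℝ⁴ (coordinates indexed by `Fin 4`). -/
noncomputable def pderiv4 (a : Fin 4) (f : (Fin 4 → ℝ) → ℝ) (p : Fin 4 → ℝ) : ℝ :=
  fderiv ℝ f p (Pi.single a 1)

/-- Lie derivative of a (0,2)-tensor field `T` along the vector field `X`:
`(L_X T)_{ab} = Σ_c X^c ∂_c T_{ab} + Σ_c T_{cb} ∂_a X^c + Σ_c T_{ac} ∂_b X^c`. -/
noncomputable def lieDerivT (X : (Fin 4 → ℝ) → Fin 4 → ℝ)
    (T : (Fin 4 → ℝ) → Matrix (Fin 4) (Fin 4) ℝ) (p : Fin 4 → ℝ) :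
    Matrix (Fin 4) (Fin 4) ℝ :=
  Matrix.of fun a b =>
    (∑ c, X p c * pderiv4 c (fun q => T q a b) p)
      + (∑ c, T p c b * pderiv4 a (fun q => X q c) p)
      + (∑ c, T p a c * pderiv4 b (fun q => X q c) p)

/-!
For the diagonal metric `diag(-1, Aᵢ(t)²)` and the vector field `ξ(t) ∂_t + Σᵢ kᵢ xᵢ ∂ᵢ`, whose
Jacobian is diagonal, the conformal Killing equation with factor `ψ` decouples into the `tt`
equation `ξ' = ψ` and the spatial equations `ξ Aᵢ' + kᵢ Aᵢ = ψ Aᵢ`. With `ξ = 1/U` the first one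
forces `ψ = -U'/U²`, and the others become `Aᵢ'/Aᵢ = -U'/U - kᵢ U`, the logarithmic derivative of
`U⁻¹ exp(-kᵢ τ)`.
-/

theorem pderiv4_comp_apply {f : ℝ → ℝ} {f' : ℝ} {p : Fin 4 → ℝ} {j : Fin 4}
    (hf : HasDerivAt f f' (p j)) (i : Fin 4) :
    pderiv4 i (fun q => f (q j)) p = if i = j then f' else 0 := by
  have hcomp : HasFDerivAt (fun q : Fin 4 → ℝ => f (q j))
      (f' • ContinuousLinearMap.proj (R := ℝ) (φ := fun _ : Fin 4 => ℝ) j) p :=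
    hf.comp_hasFDerivAt p (hasFDerivAt_apply j p)
  rw [pderiv4, hcomp.fderiv]
  simp [Pi.single_apply, eq_comm]

theorem pderiv4_diagonal_apply (d : (Fin 4 → ℝ) → Fin 4 → ℝ) (p : Fin 4 → ℝ) (a b c : Fin 4) :
    pderiv4 c (fun q => Matrix.diagonal (d q) a b) p =
      Matrix.diagonal (fun i => pderiv4 c (fun q => d q i) p) a b := by
  obtain rfl | hab := eq_or_ne a b
  · simp only [Matrix.diagonal_apply_eq]
  · simp [Matrix.diagonal_apply_ne _ hab, pderiv4]

theorem lieDerivT_diagonal {X : (Fin 4 → ℝ) → Fin 4 → ℝ} {p J : Fin 4 → ℝ}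
    (hX : ∀ b c, pderiv4 b (fun q => X q c) p = if b = c then J c else 0)
    (d : (Fin 4 → ℝ) → Fin 4 → ℝ) :
    lieDerivT X (fun q => Matrix.diagonal (d q)) p =
      Matrix.diagonal fun a => (∑ c, X p c * pderiv4 c (fun q => d q a) p) + 2 * J a * d p a := by
  ext a b
  simp only [lieDerivT, Matrix.of_apply, hX, pderiv4_diagonal_apply]
  obtain rfl | hab := eq_or_ne a b
  · simp only [Matrix.diagonal_apply, mul_ite, ite_mul, zero_mul, mul_zero, if_true,
      Finset.sum_ite_eq, Finset.mem_univ]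
    ring
  · simp [Matrix.diagonal_apply, hab]

/-- The diagonal Bianchi I metric `diag(-1, A₁(t)², A₂(t)², A₃(t)²)`, with the scale factors
indexed by `Fin 3`, so that `A i` belongs to the coordinate `i.succ`. -/
def bianchiIMetric (A : Fin 3 → ℝ → ℝ) (q : Fin 4 → ℝ) : Matrix (Fin 4) (Fin 4) ℝ :=
  Matrix.diagonal (Matrix.vecCons (-1) fun i => A i (q 0) ^ 2)

/-- The vector field `ξ(t) ∂_t + k₁ x ∂_x + k₂ y ∂_y + k₃ z ∂_z`: an anisotropic spatial dilation
with rates `k` combined with a motion along `t`, the candidate conformal Killing vector of a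
Bianchi I metric. The rate `k i` belongs to the coordinate `i.succ`. -/
def anisotropicDilation (ξ : ℝ → ℝ) (k : Fin 3 → ℝ) (q : Fin 4 → ℝ) : Fin 4 → ℝ :=
  Matrix.vecCons (ξ (q 0)) fun i => k i * q i.succ

theorem pderiv4_anisotropicDilation {ξ : ℝ → ℝ} {ξ' : ℝ} {p : Fin 4 → ℝ}
    (hξ : HasDerivAt ξ ξ' (p 0)) (k : Fin 3 → ℝ) (b c : Fin 4) :
    pderiv4 b (fun q => anisotropicDilation ξ k q c) p =
      if b = c then (Matrix.vecCons ξ' k : Fin 4 → ℝ) c else 0 := by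
  cases c using Fin.cases with
  | zero => exact pderiv4_comp_apply hξ b
  | succ i => exact pderiv4_comp_apply (hasDerivAt_const_mul (k i)) b

theorem lieDerivT_anisotropicDilation_bianchiIMetric {ξ : ℝ → ℝ} {ξ' : ℝ} {A : Fin 3 → ℝ → ℝ}
    {A' : Fin 3 → ℝ} {p : Fin 4 → ℝ} (hξ : HasDerivAt ξ ξ' (p 0))
    (hA : ∀ i, HasDerivAt (A i) (A' i) (p 0)) (k : Fin 3 → ℝ) :
    lieDerivT (anisotropicDilation ξ k) (bianchiIMetric A) p =
      Matrix.diagonal (Matrix.vecCons (-(2 * ξ'))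
        fun i => 2 * A i (p 0) * (ξ (p 0) * A' i + k i * A i (p 0))) := by
  refine (lieDerivT_diagonal (pderiv4_anisotropicDilation hξ k) _).trans
    (congrArg Matrix.diagonal (funext fun a => ?_))
  cases a using Fin.cases with
  | zero => simp [pderiv4]
  | succ i =>
    have hsq (c : Fin 4) : pderiv4 c (fun q => A i (q 0) ^ 2) p =
        if c = 0 then 2 * A i (p 0) * A' i else 0 := by
      simpa using pderiv4_comp_apply ((hA i).pow 2) c
    simp only [Matrix.cons_val_succ, hsq, mul_ite, mul_zero, Finset.sum_ite_eq',
      Finset.mem_univ, if_true, anisotropicDilation, Matrix.cons_val_zero]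
    ring

theorem lieDerivT_bianchiIMetric_eq_smul {ξ : ℝ → ℝ} {ψ : ℝ} {A : Fin 3 → ℝ → ℝ}
    {A' k : Fin 3 → ℝ} {p : Fin 4 → ℝ} (hξ : HasDerivAt ξ ψ (p 0))
    (hA : ∀ i, HasDerivAt (A i) (A' i) (p 0))
    (hψ : ∀ i, ξ (p 0) * A' i + k i * A i (p 0) = ψ * A i (p 0)) :
    lieDerivT (anisotropicDilation ξ k) (bianchiIMetric A) p = (2 * ψ) • bianchiIMetric A p := by
  rw [lieDerivT_anisotropicDilation_bianchiIMetric hξ hA, bianchiIMetric, ← Matrix.diagonal_smul]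
  refine congrArg Matrix.diagonal (funext fun a => ?_)
  cases a using Fin.cases with
  | zero => simp
  | succ i =>
    simp only [Matrix.cons_val_succ, Pi.smul_apply, smul_eq_mul, hψ]
    ring

theorem hasDerivAt_inv_mul_exp {U τ : ℝ → ℝ} {U' τ' t : ℝ} (hU : HasDerivAt U U' t)
    (hUne : U t ≠ 0) (hτ : HasDerivAt τ τ' t) (k : ℝ) :
    HasDerivAt (fun s => (U s)⁻¹ * Real.exp (-(k * τ s)))
      ((-U' / U t - k * τ') * ((U t)⁻¹ * Real.exp (-(k * τ t)))) t := by
  refine ((hU.fun_inv hUne).fun_mul (hτ.const_mul k).fun_neg.exp).congr_deriv ?_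
  field_simp
  ring

theorem lieDerivT_bianchiIMetric_of_inv_mul_exp {U τ : ℝ → ℝ} {U' : ℝ} {A : Fin 3 → ℝ → ℝ}
    {k : Fin 3 → ℝ} {p : Fin 4 → ℝ} (hU : HasDerivAt U U' (p 0)) (hUne : U (p 0) ≠ 0)
    (hτ : HasDerivAt τ (U (p 0)) (p 0))
    (hA : ∀ i, A i =ᶠ[nhds (p 0)] fun t => (U t)⁻¹ * Real.exp (-(k i * τ t))) :
    lieDerivT (anisotropicDilation (fun t => (U t)⁻¹) k) (bianchiIMetric A) p =
      (2 * (-U' / U (p 0) ^ 2)) • bianchiIMetric A p := by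
  have hA' (i : Fin 3) :
      HasDerivAt (A i) ((-U' / U (p 0) - k i * U (p 0)) * A i (p 0)) (p 0) := by
    rw [(hA i).eq_of_nhds]
    exact (hasDerivAt_inv_mul_exp hU hUne hτ (k i)).congr_of_eventuallyEq (hA i)
  refine lieDerivT_bianchiIMetric_eq_smul (hU.fun_inv hUne) hA' fun i => ?_
  field_simp
  ring

theorem bianchiI_conformal_family_admits_CKV_general
    (I : Set ℝ) (hIopen : IsOpen I)
    (U τ : ℝ → ℝ) (hU : DifferentiableOn ℝ U I) (hUne : ∀ t ∈ I, U t ≠ 0)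
    (hτ : ∀ t ∈ I, HasDerivAt τ (U t) t)
    (a b c : ℝ)
    (A₁ A₂ A₃ : ℝ → ℝ)
    (hA₁ : ∀ t ∈ I, A₁ t = (U t)⁻¹ * Real.exp (-(a * τ t)))
    (hA₂ : ∀ t ∈ I, A₂ t = (U t)⁻¹ * Real.exp (-(b * τ t)))
    (hA₃ : ∀ t ∈ I, A₃ t = (U t)⁻¹ * Real.exp (-(c * τ t)))
    (g : (Fin 4 → ℝ) → Matrix (Fin 4) (Fin 4) ℝ)
    (hg : ∀ p : Fin 4 → ℝ,
      g p = Matrix.diagonal ![(-1 : ℝ), (A₁ (p 0)) ^ 2, (A₂ (p 0)) ^ 2, (A₃ (p 0)) ^ 2])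
    (Y : (Fin 4 → ℝ) → Fin 4 → ℝ)
    (hY : ∀ p : Fin 4 → ℝ, Y p = ![(U (p 0))⁻¹, a * p 1, b * p 2, c * p 3])
    (ψ : ℝ → ℝ) (hψ : ∀ t ∈ I, ψ t = -(deriv U t) / (U t) ^ 2) :
    ∀ p : Fin 4 → ℝ, p 0 ∈ I → lieDerivT Y g p = (2 * ψ (p 0)) • g p := by
  intro p hp
  have hI : I ∈ nhds (p 0) := hIopen.mem_nhds hp
  have hY' : Y = anisotropicDilation (fun t => (U t)⁻¹) ![a, b, c] := by
    funext q i
    rw [hY]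
    fin_cases i <;> rfl
  have hg' : g = bianchiIMetric ![A₁, A₂, A₃] := by
    funext q
    refine (hg q).trans (congrArg Matrix.diagonal (funext fun i => ?_))
    fin_cases i <;> rfl
  have hA (i : Fin 3) : Set.EqOn (![A₁, A₂, A₃] i)
      (fun t => (U t)⁻¹ * Real.exp (-(![a, b, c] i * τ t))) I := by
    fin_cases i
    exacts [hA₁, hA₂, hA₃]
  rw [hY', hg', hψ _ hp]
  exact lieDerivT_bianchiIMetric_of_inv_mul_exp (hU.hasDerivAt hI) (hUne _ hp) (hτ _ hp)
    fun i => (hA i).eventuallyEq_of_mem hI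

/-- Every Bianchi I metric of the family `A_μ = U⁻¹ e^{-k_μ τ}` (k₁,k₂,k₃ = a,b,c,
`τ` an antiderivative of `U`) admits the conformal Killing vector
`Y = (1/U) ∂_t + a x ∂_x + b y ∂_y + c z ∂_z` with conformal factor `ψ = -U'/U²`. -/
theorem bianchiI_conformal_family_admits_CKV
    (I : Set ℝ) (hIopen : IsOpen I) (hIconn : I.OrdConnected)
    (U τ : ℝ → ℝ) (hU : ContDiffOn ℝ (⊤ : ℕ∞) U I) (hUne : ∀ t ∈ I, U t ≠ 0)
    (hτ : ∀ t ∈ I, HasDerivAt τ (U t) t)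
    (a b c : ℝ)
    (A₁ A₂ A₃ : ℝ → ℝ)
    (hA₁ : ∀ t ∈ I, A₁ t = (U t)⁻¹ * Real.exp (-(a * τ t)))
    (hA₂ : ∀ t ∈ I, A₂ t = (U t)⁻¹ * Real.exp (-(b * τ t)))
    (hA₃ : ∀ t ∈ I, A₃ t = (U t)⁻¹ * Real.exp (-(c * τ t)))
    (g : (Fin 4 → ℝ) → Matrix (Fin 4) (Fin 4) ℝ)
    (hg : ∀ p : Fin 4 → ℝ,
      g p = Matrix.diagonal ![(-1 : ℝ), (A₁ (p 0)) ^ 2, (A₂ (p 0)) ^ 2, (A₃ (p 0)) ^ 2])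
    (Y : (Fin 4 → ℝ) → Fin 4 → ℝ)
    (hY : ∀ p : Fin 4 → ℝ, Y p = ![(U (p 0))⁻¹, a * p 1, b * p 2, c * p 3])
    (ψ : ℝ → ℝ) (hψ : ∀ t ∈ I, ψ t = -(deriv U t) / (U t) ^ 2) :
    ∀ p : Fin 4 → ℝ, p 0 ∈ I → lieDerivT Y g p = (2 * ψ (p 0)) • g p :=
  bianchiI_conformal_family_admits_CKV_general I hIopen U τ (hU.differentiableOn (by simp)) hUne hτ
    a b c A₁ A₂ A₃ hA₁ hA₂ hA₃ g hg Y hY ψ hψ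
end

section
/- Let I ⊆ ℝ be an open interval, let R₁, R₂, R₃ : I → ℝ be nonvanishing functions of t only, and let X¹, X², X³ : I × ℝ³ → ℝ be smooth functions on the coordinates (t,x¹,x²,x³) satisfying R_μ(t)·∂_ν X^μ + R_ν(t)·∂_μ X^ν = 0 for all distinct μ, ν ∈ {1,2,3}. Then ∂_μ ∂_ρ X^ν = 0 for all pairwise distinct indices μ, ν, ρ ∈ {1,2,3}. -/
/-- Spatial coordinate index: `μ ∈ {1,2,3}` viewed inside `Fin 4`. -/
def spIdx (μ : Fin 3) : Fin 4 := μ.succ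

/-!
Each collineation equation relates `∂_ν X^μ` to `∂_μ X^ν`. Differentiating it in the third spatial
direction leaves `R_μ` and `R_ν` alone, so with `T_μ := R_μ ∂_ν ∂_ρ X^μ` and its permutations the
symmetry of second derivatives turns the three equations into `T_μ + T_ν = 0`, `T_ν + T_ρ = 0` and
`T_μ + T_ρ = 0`. Hence all three vanish.
-/

open scoped Topology

section DirectionalDerivatives

variable {𝕜 E F : Type*} [NontriviallyNormedField 𝕜]
  [NormedAddCommGroup E] [NormedSpace 𝕜 E] [NormedAddCommGroup F] [NormedSpace 𝕜 F]

theorem hasLineDerivAt_smul_of_hasLineDerivAt_zero {V : Type*} [AddCommGroup V] [Module 𝕜 V]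
    {a : V → 𝕜} {f : V → F} {f' : F} {p w : V}
    (ha : HasLineDerivAt 𝕜 a 0 p w) (hf : HasLineDerivAt 𝕜 f f' p w) :
    HasLineDerivAt 𝕜 (fun q ↦ a q • f q) (a p • f') p w := by
  simpa [HasLineDerivAt] using HasDerivAt.fun_smul ha hf

theorem smul_add_smul_eq_zero_of_hasLineDerivAt {a b : E → 𝕜} {f g : E → F} {f' g' : F} {p w : E}
    (ha : HasLineDerivAt 𝕜 a 0 p w) (hb : HasLineDerivAt 𝕜 b 0 p w)
    (hf : HasLineDerivAt 𝕜 f f' p w) (hg : HasLineDerivAt 𝕜 g g' p w)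
    (h : ∀ᶠ q in 𝓝 p, a q • f q + b q • g q = 0) :
    a p • f' + b p • g' = 0 := by
  have hsum : HasLineDerivAt 𝕜 (fun q ↦ a q • f q + b q • g q) (a p • f' + b p • g') p w :=
    HasDerivAt.add (hasLineDerivAt_smul_of_hasLineDerivAt_zero ha hf)
      (hasLineDerivAt_smul_of_hasLineDerivAt_zero hb hg)
  have hzero : HasLineDerivAt 𝕜 (fun _ : E ↦ (0 : F)) 0 p w := hasDerivAt_const _ _
  exact hsum.unique (hzero.congr_of_eventuallyEq h)

theorem hasLineDerivAt_comp_eval_single_of_ne {ι : Type*} [DecidableEq ι] (r : 𝕜 → F) (p : ι → 𝕜)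
    {i j : ι} (hij : i ≠ j) :
    HasLineDerivAt 𝕜 (fun q : ι → 𝕜 ↦ r (q i)) 0 p (Pi.single j 1) := by
  simpa [HasLineDerivAt, hij] using hasDerivAt_const (0 : 𝕜) (r (p i))

theorem differentiableAt_fderiv_of_contDiffAt_two {f : E → F} {p : E} (hf : ContDiffAt 𝕜 2 f p) :
    DifferentiableAt 𝕜 (fderiv 𝕜 f) p :=
  (hf.fderiv_right (m := 1) (by norm_num)).differentiableAt one_ne_zero

theorem fderiv_fderiv_apply {f : E → F} {p : E} (hf : DifferentiableAt 𝕜 (fderiv 𝕜 f) p)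
    (v w : E) :
    fderiv 𝕜 (fun q ↦ fderiv 𝕜 f q v) p w = fderiv 𝕜 (fderiv 𝕜 f) p w v := by
  simp [fderiv_clm_apply hf (differentiableAt_const v)]

end DirectionalDerivatives

section Collineation

variable {𝕜 E F : Type*} [RCLike 𝕜]
  [NormedAddCommGroup E] [NormedSpace 𝕜 E] [NormedAddCommGroup F] [NormedSpace 𝕜 F]

theorem fderiv_fderiv_apply_comm {f : E → F} {p : E} (hf : ContDiffAt 𝕜 2 f p) (v w : E) :
    fderiv 𝕜 (fun q ↦ fderiv 𝕜 f q v) p w = fderiv 𝕜 (fun q ↦ fderiv 𝕜 f q w) p v := by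
  have hf' := differentiableAt_fderiv_of_contDiffAt_two hf
  rw [fderiv_fderiv_apply hf', fderiv_fderiv_apply hf']
  exact hf.isSymmSndFDerivAt (by simp) w v

theorem ricci_collineation_mixed_second_derivatives_vanish_general {ι : Type*} {U : Set E}
    (hU : IsOpen U) {e : ι → E} {R : ι → E → 𝕜}
    (hR : ∀ μ ν, μ ≠ ν → ∀ p ∈ U, HasLineDerivAt 𝕜 (R μ) 0 p (e ν))
    (hRne : ∀ μ, ∀ p ∈ U, R μ p ≠ 0)
    {X : ι → E → F} (hX : ∀ μ, ContDiffOn 𝕜 2 (X μ) U)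
    (heq : ∀ μ ν, μ ≠ ν → ∀ p ∈ U,
      R μ p • fderiv 𝕜 (X μ) p (e ν) + R ν p • fderiv 𝕜 (X ν) p (e μ) = 0)
    {μ ν ρ : ι} (hμν : μ ≠ ν) (hνρ : ν ≠ ρ) (hμρ : μ ≠ ρ) {p : E} (hp : p ∈ U) :
    fderiv 𝕜 (fun q ↦ fderiv 𝕜 (X ν) q (e ρ)) p (e μ) = 0 := by
  have hXp (κ : ι) : ContDiffAt 𝕜 2 (X κ) p := (hX κ).contDiffAt (hU.mem_nhds hp)
  have hdX (κ : ι) (v w : E) : HasLineDerivAt 𝕜 (fun q ↦ fderiv 𝕜 (X κ) q v)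
      (fderiv 𝕜 (fun q ↦ fderiv 𝕜 (X κ) q v) p w) p w :=
    ((differentiableAt_fderiv_of_contDiffAt_two (hXp κ)).clm_apply
      (differentiableAt_const v)).hasFDerivAt.hasLineDerivAt w
  have deriv_eq {α β γ : ι} (hαβ : α ≠ β) (hαγ : α ≠ γ) (hβγ : β ≠ γ) :
      R α p • fderiv 𝕜 (fun q ↦ fderiv 𝕜 (X α) q (e β)) p (e γ) +
        R β p • fderiv 𝕜 (fun q ↦ fderiv 𝕜 (X β) q (e α)) p (e γ) = 0 :=
    smul_add_smul_eq_zero_of_hasLineDerivAt (hR α γ hαγ p hp) (hR β γ hβγ p hp)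
      (hdX α (e β) (e γ)) (hdX β (e α) (e γ))
      (Filter.eventually_of_mem (hU.mem_nhds hp) (heq α β hαβ))
  have hsum_μν := deriv_eq hμν hμρ hνρ
  have hsum_νρ := deriv_eq hνρ hμν.symm hμρ.symm
  have hsum_μρ := deriv_eq hμρ hμν hνρ.symm
  rw [fderiv_fderiv_apply_comm (hXp ν) (e μ) (e ρ)] at hsum_μν
  rw [fderiv_fderiv_apply_comm (hXp ρ) (e ν) (e μ)] at hsum_νρ
  rw [fderiv_fderiv_apply_comm (hXp μ) (e ρ) (e ν)] at hsum_μρ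
  have hT : R ν p • fderiv 𝕜 (fun q ↦ fderiv 𝕜 (X ν) q (e ρ)) p (e μ) = 0 := by
    linear_combination (norm := module) (1 / 2 : 𝕜) • (hsum_μν + hsum_νρ - hsum_μρ)
  exact (smul_eq_zero.mp hT).resolve_left (hRne ν p hp)

end Collineation

/-- If smooth functions `X¹,X²,X³` satisfy the off-diagonal spatial Ricci collineation
equations `R_μ ∂_ν X^μ + R_ν ∂_μ X^ν = 0` (μ ≠ ν) for nonvanishing functions `R_μ` of `t`
only, then the mixed spatial second derivatives vanish: `∂_μ ∂_ρ X^ν = 0` for pairwise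
distinct `μ, ν, ρ`. -/
theorem ricci_collineation_mixed_second_derivatives_vanish
    (I : Set ℝ) (hIopen : IsOpen I) (hIconn : I.OrdConnected)
    (R : Fin 3 → ℝ → ℝ) (hRne : ∀ (μ : Fin 3), ∀ t ∈ I, R μ t ≠ 0)
    (X : Fin 3 → (Fin 4 → ℝ) → ℝ)
    (hX : ∀ μ : Fin 3, ContDiffOn ℝ (⊤ : ℕ∞) (X μ) {p : Fin 4 → ℝ | p 0 ∈ I})
    (heq : ∀ μ ν : Fin 3, μ ≠ ν → ∀ p : Fin 4 → ℝ, p 0 ∈ I →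
      R μ (p 0) * pderiv4 (spIdx ν) (X μ) p + R ν (p 0) * pderiv4 (spIdx μ) (X ν) p = 0) :
    ∀ μ ν ρ : Fin 3, μ ≠ ν → ν ≠ ρ → μ ≠ ρ →
      ∀ p : Fin 4 → ℝ, p 0 ∈ I →
        pderiv4 (spIdx μ) (fun q => pderiv4 (spIdx ρ) (X ν) q) p = 0 :=
  fun _ _ _ hμν hνρ hμρ _ hp ↦
    ricci_collineation_mixed_second_derivatives_vanish_general
      (hIopen.preimage (continuous_apply 0))
      (fun μ ν _ p _ ↦ hasLineDerivAt_comp_eval_single_of_ne (R μ) p (Fin.succ_ne_zero ν).symm)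
      (fun μ p ↦ hRne μ (p 0)) (fun μ ↦ contDiffOn_infty.1 (hX μ) 2) heq hμν hνρ hμρ hp
end

section
/- Let R : ℝ⁴ → Matrix (Fin 4) (Fin 4) ℝ be a diagonal symmetric tensor field whose entries depend only on the first coordinate t, and suppose its (1,1) diagonal entry vanishes identically, R₁₁ ≡ 0. Then for every smooth function f : ℝ⁴ → ℝ, the vector field X with components (0, f, 0, 0) satisfies L_X R = 0. In particular, a Bianchi I space-time whose Ricci tensor has R₁₁ = 0 (degenerate Ricci tensor of rank 3) admits infinitely many smooth Ricci collineations. -/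
/-!
Lie differentiation satisfies the Leibniz rule
`L_{fX} T = f L_X T + df ⊗ T(X, ·) + T(·, X) ⊗ df`. When `X` annihilates `T` on both sides, the last
two terms vanish, so `L_X T = 0` forces `L_{fX} T = 0` for every `f`. This applies to the coordinate
field `X = ∂₁`: it lies in the kernel of `R` because `R` is diagonal with `R₁₁ = 0`, and it
satisfies `L_X R = 0` because `R` is invariant under translations of the coordinate `x¹`.
-/

open scoped Matrix

theorem fderiv_apply_eq_zero_of_forall_add_smul {𝕜 E F : Type*} [NontriviallyNormedField 𝕜]
    [NormedAddCommGroup E] [NormedSpace 𝕜 E] [NormedAddCommGroup F] [NormedSpace 𝕜 F]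
    {f : E → F} {x v : E} (h : ∀ t : 𝕜, f (x + t • v) = f x) : fderiv 𝕜 f x v = 0 := by
  by_cases hf : DifferentiableAt 𝕜 f x
  · simp [← hf.lineDeriv_eq_fderiv, lineDeriv, h]
  · simp [fderiv_zero_of_not_differentiableAt hf]

theorem mulVec_single_one_eq_zero_of_isDiag {n α : Type*} [Fintype n] [DecidableEq n]
    [NonAssocSemiring α] {M : Matrix n n α} (hM : M.IsDiag) {i : n} (hi : M i i = 0) :
    M *ᵥ Pi.single i 1 = 0 := by
  rw [← hM.diagonal_diag, Matrix.diagonal_mulVec_single, Matrix.diag_apply, hi, zero_mul,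
    Pi.single_zero]

section LieDerivative

variable {T : (Fin 4 → ℝ) → Matrix (Fin 4) (Fin 4) ℝ} {X : (Fin 4 → ℝ) → Fin 4 → ℝ}
  {f g : (Fin 4 → ℝ) → ℝ} {p : Fin 4 → ℝ}

theorem pderiv4_mul (a : Fin 4) (hf : DifferentiableAt ℝ f p) (hg : DifferentiableAt ℝ g p) :
    pderiv4 a (fun q => f q * g q) p = f p * pderiv4 a g p + g p * pderiv4 a f p := by
  simp [pderiv4, fderiv_fun_mul hf hg]

theorem lieDerivT_smul (hf : DifferentiableAt ℝ f p) (hX : DifferentiableAt ℝ X p) :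
    lieDerivT (fun q => f q • X q) T p =
      f p • lieDerivT X T p
        + Matrix.vecMulVec (fun a => pderiv4 a f p) (X p ᵥ* T p)
        + Matrix.vecMulVec (T p *ᵥ X p) (fun b => pderiv4 b f p) := by
  have hmul (a c : Fin 4) : pderiv4 a (fun q => f q * X q c) p =
      f p * pderiv4 a (fun q => X q c) p + X p c * pderiv4 a f p :=
    pderiv4_mul a hf (differentiableAt_pi.1 hX c)
  ext a b
  simp only [lieDerivT, Pi.smul_apply, smul_eq_mul, hmul, Matrix.add_apply, Matrix.smul_apply,
    Matrix.of_apply, Matrix.vecMulVec_apply, Matrix.vecMul, Matrix.mulVec, dotProduct,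
    Fin.sum_univ_four]
  ring

theorem lieDerivT_const_apply (v : Fin 4 → ℝ) (a b : Fin 4) :
    lieDerivT (fun _ => v) T p a b = fderiv ℝ (fun q => T q a b) p v := by
  conv_rhs => rw [pi_eq_sum_univ' v]
  simp [lieDerivT, pderiv4]

theorem lieDerivT_const_eq_zero_of_forall_add_smul {v : Fin 4 → ℝ}
    (hT : ∀ t : ℝ, T (p + t • v) = T p) : lieDerivT (fun _ => v) T p = 0 := by
  ext a b
  rw [lieDerivT_const_apply]
  exact fderiv_apply_eq_zero_of_forall_add_smul fun t => by rw [hT]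

theorem degenerate_ricci_infinitely_many_RCs_general (hX : DifferentiableAt ℝ X p)
    (hleft : X p ᵥ* T p = 0) (hright : T p *ᵥ X p = 0) (hLie : lieDerivT X T p = 0)
    (hf : DifferentiableAt ℝ f p) : lieDerivT (fun q => f q • X q) T p = 0 := by
  simp [lieDerivT_smul hf hX, hleft, hright, hLie]

end LieDerivative

/-- If the (diagonal, `t`-dependent) Ricci tensor field `R` of a Bianchi I space-time has
`R₁₁ ≡ 0` (degenerate Ricci tensor of rank 3), then for every smooth `f : ℝ⁴ → ℝ` the
vector field `X = (0, f, 0, 0)` is a Ricci collineation: `L_X R = 0`. Hence there are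
infinitely many smooth Ricci collineations. -/
theorem degenerate_ricci_infinitely_many_RCs
    (R : (Fin 4 → ℝ) → Matrix (Fin 4) (Fin 4) ℝ)
    (hdiag : ∀ (p : Fin 4 → ℝ) (a b : Fin 4), a ≠ b → R p a b = 0)
    (hsymm : ∀ p : Fin 4 → ℝ, (R p).IsSymm)
    (hdep : ∀ p q : Fin 4 → ℝ, p 0 = q 0 → R p = R q)
    (h11 : ∀ p : Fin 4 → ℝ, R p 1 1 = 0) :
    ∀ f : (Fin 4 → ℝ) → ℝ, ContDiff ℝ (⊤ : ℕ∞) f →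
      ∀ p : Fin 4 → ℝ, lieDerivT (fun q => ![(0 : ℝ), f q, 0, 0]) R p = 0 := by
  intro f hf p
  have hfield : (fun q => ![(0 : ℝ), f q, 0, 0]) = fun q => f q • Pi.single 1 1 := by
    ext q c
    fin_cases c <;> simp
  have hright : R p *ᵥ Pi.single 1 1 = 0 :=
    mulVec_single_one_eq_zero_of_isDiag (hdiag p) (h11 p)
  have hleft : Pi.single 1 1 ᵥ* R p = 0 := by
    rw [← Matrix.mulVec_transpose, hsymm p, hright]
  have hLie : lieDerivT (fun _ => Pi.single 1 1) R p = 0 :=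
    lieDerivT_const_eq_zero_of_forall_add_smul fun t => hdep _ _ (by simp)
  rw [hfield]
  exact degenerate_ricci_infinitely_many_RCs_general (differentiableAt_const _) hleft hright hLie
    (hf.differentiable (by simp) p)
end

section
/- Let I ⊆ ℝ be an open interval, R₀ : I → ℝ smooth and positive, F an antiderivative of √R₀ on I, let R₁, R₂, R₃ be nonzero constants, let b^μ_ν (μ ≠ ν ∈ {1,2,3}) be constants satisfying R_μ·b^μ_ν + R_ν·b^ν_μ = 0 for all μ ≠ ν, and let D₁, D₂, D₃, d be constants. Define the vector field X by X⁰(t,x¹,x²,x³) = (D₁x¹ + D₂x² + D₃x³ + d)/√R₀(t) and X^μ(t,x¹,x²,x³) = Σ_{ν≠μ} b^μ_ν x^ν − (D_μ/R_μ)·F(t) for μ = 1,2,3. Then X satisfies L_X R = 0, where R = diag(R₀(t), R₁, R₂, R₃). Hence a Bianchi I space-time with time-independent spatial Ricci components admits this seven-parameter family of Ricci collineations. -/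
open scoped Topology

section LieDerivative

variable {ι : Type*} {p : ι → ℝ}

theorem hasFDerivAt_comp_apply [Finite ι] {f : ℝ → ℝ} {f' : ℝ} {i : ι}
    (hf : HasDerivAt f f' (p i)) :
    HasFDerivAt (fun q : ι → ℝ => f (q i))
      (f' • ContinuousLinearMap.proj (R := ℝ) (φ := fun _ => ℝ) i) p := by
  cases nonempty_fintype ι
  exact hf.comp_hasFDerivAt p (ContinuousLinearMap.proj (R := ℝ) (φ := fun _ => ℝ) i).hasFDerivAt

variable [DecidableEq ι]

/-- The partial derivative `∂ᵢ f` on `ι → ℝ`; `pderiv4` is the case `ι = Fin 4`. -/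
noncomputable def partialDeriv (i : ι) (f : (ι → ℝ) → ℝ) (p : ι → ℝ) : ℝ :=
  fderiv ℝ f p (Pi.single i 1)

theorem partialDeriv_comp_apply [Finite ι] {f : ℝ → ℝ} {f' : ℝ} {i : ι}
    (hf : HasDerivAt f f' (p i)) (k : ι) :
    partialDeriv k (fun q => f (q i)) p = if k = i then f' else 0 := by
  simp [partialDeriv, (hasFDerivAt_comp_apply hf).fderiv, Pi.single_apply, eq_comm]

variable [Fintype ι]

/-- The Lie derivative along `X` of a covariant 2-tensor field `T` on `ι → ℝ`, in components;
`lieDerivT` is the case `ι = Fin 4`. -/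
noncomputable def lieDeriv (X : (ι → ℝ) → ι → ℝ) (T : (ι → ℝ) → Matrix ι ι ℝ) (p : ι → ℝ) :
    Matrix ι ι ℝ :=
  Matrix.of fun i j =>
    (∑ k, X p k * partialDeriv k (fun q => T q i j) p)
      + (∑ k, T p k j * partialDeriv i (fun q => X q k) p)
      + (∑ k, T p i k * partialDeriv j (fun q => X q k) p)

theorem lieDerivT_eq_lieDeriv : lieDerivT = lieDeriv := rfl

theorem lieDeriv_congr_tensor {X : (ι → ℝ) → ι → ℝ} {T T' : (ι → ℝ) → Matrix ι ι ℝ}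
    (h : T =ᶠ[𝓝 p] T') : lieDeriv X T p = lieDeriv X T' p := by
  have hentry (i j : ι) : (fun q => T q i j) =ᶠ[𝓝 p] fun q => T' q i j := by
    filter_upwards [h] with q hq
    rw [hq]
  have hpartial (i j k : ι) :
      partialDeriv k (fun q => T q i j) p = partialDeriv k (fun q => T' q i j) p := by
    rw [partialDeriv, partialDeriv, (hentry i j).fderiv_eq]
  simp only [lieDeriv, hpartial, h.eq_of_nhds]

theorem lieDeriv_diagonal_apply (X τ : (ι → ℝ) → ι → ℝ) (i j : ι) :
    lieDeriv X (fun q => Matrix.diagonal (τ q)) p i j =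
      (if i = j then ∑ k, X p k * partialDeriv k (fun q => τ q i) p else 0)
        + τ p j * partialDeriv i (fun q => X q j) p
        + τ p i * partialDeriv j (fun q => X q i) p := by
  rcases eq_or_ne i j with rfl | hij
  · simp [lieDeriv, Matrix.diagonal_apply]
  · simp [lieDeriv, Matrix.diagonal_apply, hij, partialDeriv]

end LieDerivative

section AffinePullback

variable {ι : Type*} [Fintype ι] {s F : ι → ℝ → ℝ} {A : Matrix ι ι ℝ} {c η p : ι → ℝ}

/-- The pullback of the affine vector field `y ↦ A y + c` under the change of coordinates
`yⁱ = Fᵢ(xⁱ)`, where `sᵢ` stands for the derivative of `Fᵢ`. -/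
noncomputable def affinePullback (s F : ι → ℝ → ℝ) (A : Matrix ι ι ℝ) (c : ι → ℝ)
    (q : ι → ℝ) (i : ι) : ℝ :=
  (∑ j, A i j * F j (q j) + c i) / s i (q i)

variable [DecidableEq ι]

theorem partialDeriv_affinePullback {s' : ℝ} {i : ι} (hF : ∀ j, HasDerivAt (F j) (s j (p j)) (p j))
    (hs : HasDerivAt (s i) s' (p i)) (hs₀ : s i (p i) ≠ 0) (k : ι) :
    partialDeriv k (fun q => affinePullback s F A c q i) p =
      (A i k * s k (p k) - if k = i then affinePullback s F A c p i * s' else 0) / s i (p i) := by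
  have hnum : HasFDerivAt (fun q : ι → ℝ => ∑ j, A i j * F j (q j) + c i) _ p :=
    (HasFDerivAt.fun_sum fun j _ =>
      (hasFDerivAt_comp_apply (hF j)).const_mul (A i j)).add_const (c i)
  have hden : HasFDerivAt (fun q : ι → ℝ => (s i (q i))⁻¹) _ p :=
    hasFDerivAt_comp_apply (hs.fun_inv hs₀)
  have hquot : HasFDerivAt (fun q => affinePullback s F A c q i) _ p := hnum.mul hden
  rw [partialDeriv, hquot.fderiv]
  rcases eq_or_ne k i with rfl | hki
  · simp only [add_apply, smul_apply, sum_apply, ContinuousLinearMap.proj_apply, Pi.single_apply,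
      smul_eq_mul, mul_ite, mul_one, mul_zero, Finset.sum_ite_eq', Finset.mem_univ, if_true,
      affinePullback]
    field_simp
    ring
  · simp [Pi.single_apply, hki, hki.symm, mul_comm, div_eq_mul_inv]

theorem lieDeriv_affinePullback_apply (hF : ∀ i, HasDerivAt (F i) (s i (p i)) (p i))
    (hs : ∀ i, DifferentiableAt ℝ (s i) (p i)) (hs₀ : ∀ i, s i (p i) ≠ 0) (i j : ι) :
    lieDeriv (affinePullback s F A c) (fun q => Matrix.diagonal fun i => η i * s i (q i) ^ 2) p i j
      = s i (p i) * s j (p j) * (η i * A i j + η j * A j i) := by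
  have htensor (k : ι) := partialDeriv_comp_apply (((hs i).hasDerivAt.fun_pow 2).const_mul (η i)) k
  have hfield (i k : ι) :=
    partialDeriv_affinePullback (A := A) (c := c) hF (hs i).hasDerivAt (hs₀ i) k
  have hj := hs₀ j
  simp only [lieDeriv_diagonal_apply, htensor, hfield]
  rcases eq_or_ne i j with rfl | hij
  · simp only [mul_ite, mul_zero, Finset.sum_ite_eq', Finset.mem_univ, if_true]
    field_simp
    ring
  · simp only [hij, hij.symm, if_false]
    field_simp
    ring

theorem lieDeriv_affinePullback_eq_zero_iff (hF : ∀ i, HasDerivAt (F i) (s i (p i)) (p i))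
    (hs : ∀ i, DifferentiableAt ℝ (s i) (p i)) (hs₀ : ∀ i, s i (p i) ≠ 0) :
    lieDeriv (affinePullback s F A c) (fun q => Matrix.diagonal fun i => η i * s i (q i) ^ 2) p = 0
      ↔ ∀ i j, η i * A i j + η j * A j i = 0 := by
  simp [← Matrix.ext_iff, lieDeriv_affinePullback_apply hF hs hs₀, hs₀]

end AffinePullback

section CaseD

variable {n : ℕ} {Rs D : Fin n → ℝ} {b : Fin n → Fin n → ℝ}

/-- The linear part of the Case D vector field in the coordinates `(F(t), x¹, …, xⁿ)`: the
coefficients `D` and `-D/Rs` mix time and space, and the diagonal of `b` is discarded. -/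
noncomputable def caseDMatrix (Rs D : Fin n → ℝ) (b : Fin n → Fin n → ℝ) :
    Matrix (Fin (n + 1)) (Fin (n + 1)) ℝ :=
  Matrix.of <| Fin.cons (Fin.cons 0 D) fun μ =>
    Fin.cons (-(D μ / Rs μ)) fun ν => if ν ≠ μ then b μ ν else 0

theorem caseDMatrix_skew (hRs : ∀ μ, Rs μ ≠ 0)
    (hb : ∀ μ ν, μ ≠ ν → Rs μ * b μ ν + Rs ν * b ν μ = 0) (i j : Fin (n + 1)) :
    (Fin.cons 1 Rs : Fin (n + 1) → ℝ) i * caseDMatrix Rs D b i j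
      + (Fin.cons 1 Rs : Fin (n + 1) → ℝ) j * caseDMatrix Rs D b j i = 0 := by
  cases i using Fin.cases with
  | zero =>
    cases j using Fin.cases with
    | zero => simp [caseDMatrix]
    | succ ν => simp [caseDMatrix, mul_div_cancel₀, hRs]
  | succ μ =>
    cases j using Fin.cases with
    | zero => simp [caseDMatrix, mul_div_cancel₀, hRs]
    | succ ν =>
      rcases eq_or_ne μ ν with rfl | hμν
      · simp [caseDMatrix]
      · simpa [caseDMatrix, hμν, hμν.symm] using hb μ ν hμν

theorem bianchiI_caseD_ricci_collineations_general {R₀ F : ℝ → ℝ} {d : ℝ}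
    {Ric : (Fin (n + 1) → ℝ) → Matrix (Fin (n + 1)) (Fin (n + 1)) ℝ}
    {X : (Fin (n + 1) → ℝ) → Fin (n + 1) → ℝ} {p : Fin (n + 1) → ℝ}
    (hR : DifferentiableAt ℝ R₀ (p 0)) (hRpos : 0 < R₀ (p 0))
    (hF : HasDerivAt F (√(R₀ (p 0))) (p 0)) (hRs : ∀ μ, Rs μ ≠ 0)
    (hb : ∀ μ ν, μ ≠ ν → Rs μ * b μ ν + Rs ν * b ν μ = 0)
    (hRic : ∀ q, Ric q = Matrix.diagonal (Fin.cons (R₀ (q 0)) Rs))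
    (hX0 : ∀ q, X q 0 = (∑ μ, D μ * q μ.succ + d) / √(R₀ (q 0)))
    (hXsp : ∀ q (μ : Fin n),
      X q μ.succ = (∑ ν with ν ≠ μ, b μ ν * q ν.succ) - (D μ / Rs μ) * F (q 0)) :
    lieDeriv X Ric p = 0 := by
  let s : Fin (n + 1) → ℝ → ℝ := Fin.cons (fun t => √(R₀ t)) fun _ _ => 1
  let y : Fin (n + 1) → ℝ → ℝ := Fin.cons F fun _ => id
  have hy : ∀ i, HasDerivAt (y i) (s i (p i)) (p i) := Fin.cases hF fun _ => hasDerivAt_id _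
  have hs : ∀ i, DifferentiableAt ℝ (s i) (p i) :=
    Fin.cases (hR.sqrt hRpos.ne') fun _ => differentiableAt_const _
  have hs₀ : ∀ i, s i (p i) ≠ 0 := Fin.cases (Real.sqrt_pos.2 hRpos).ne' fun _ => one_ne_zero
  have hX : X = affinePullback s y (caseDMatrix Rs D b) (Fin.cons d 0) := by
    ext q i
    cases i using Fin.cases with
    | zero => simp [hX0, affinePullback, caseDMatrix, s, y, Fin.sum_univ_succ]
    | succ μ =>
      simp [hXsp, affinePullback, caseDMatrix, s, y, Fin.sum_univ_succ, Finset.sum_filter,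
        sub_eq_neg_add]
  have hRic' : Ric =ᶠ[𝓝 p] fun q =>
      Matrix.diagonal fun i => (Fin.cons 1 Rs : Fin (n + 1) → ℝ) i * s i (q i) ^ 2 := by
    have hpos : ∀ᶠ q : Fin (n + 1) → ℝ in 𝓝 p, 0 < R₀ (q 0) :=
      (continuousAt_apply 0 p).eventually (hR.continuousAt.eventually_const_lt hRpos)
    filter_upwards [hpos] with q hq
    rw [hRic]
    congr 1
    ext i
    cases i using Fin.cases <;> simp [s, Real.sq_sqrt hq.le]
  rw [hX, lieDeriv_congr_tensor hRic']
  exact (lieDeriv_affinePullback_eq_zero_iff hy hs hs₀).2 (caseDMatrix_skew hRs hb)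

end CaseD

/-- Case D: for a Ricci tensor `R = diag(R₀(t), R₁, R₂, R₃)` with constant nonzero spatial
components, the seven-parameter family of vector fields
`X⁰ = (D₁x¹ + D₂x² + D₃x³ + d)/√R₀`, `X^μ = Σ_{ν≠μ} b^μ_ν x^ν - (D_μ/R_μ) F(t)`
(with `F' = √R₀` and `R_μ b^μ_ν + R_ν b^ν_μ = 0` for `μ ≠ ν`) consists of Ricci
collineations: `L_X R = 0`. -/
theorem bianchiI_caseD_ricci_collineations
    (I : Set ℝ) (hIopen : IsOpen I) (hIconn : I.OrdConnected)
    (R₀ : ℝ → ℝ) (hR : ContDiffOn ℝ (⊤ : ℕ∞) R₀ I) (hRpos : ∀ t ∈ I, 0 < R₀ t)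
    (F : ℝ → ℝ) (hF : ∀ t ∈ I, HasDerivAt F (Real.sqrt (R₀ t)) t)
    (Rs : Fin 3 → ℝ) (hRs : ∀ μ : Fin 3, Rs μ ≠ 0)
    (b : Fin 3 → Fin 3 → ℝ)
    (hb : ∀ μ ν : Fin 3, μ ≠ ν → Rs μ * b μ ν + Rs ν * b ν μ = 0)
    (D : Fin 3 → ℝ) (d : ℝ)
    (Ric : (Fin 4 → ℝ) → Matrix (Fin 4) (Fin 4) ℝ)
    (hRic : ∀ p : Fin 4 → ℝ, Ric p = Matrix.diagonal (Fin.cons (R₀ (p 0)) Rs))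
    (X : (Fin 4 → ℝ) → Fin 4 → ℝ)
    (hX0 : ∀ p : Fin 4 → ℝ,
      X p 0 = (D 0 * p 1 + D 1 * p 2 + D 2 * p 3 + d) / Real.sqrt (R₀ (p 0)))
    (hXsp : ∀ (p : Fin 4 → ℝ) (μ : Fin 3),
      X p μ.succ = (∑ ν ∈ Finset.univ.filter (fun ν : Fin 3 => ν ≠ μ), b μ ν * p ν.succ)
        - (D μ / Rs μ) * F (p 0)) :
    ∀ p : Fin 4 → ℝ, p 0 ∈ I → lieDerivT X Ric p = 0 := by
  intro p hp
  rw [lieDerivT_eq_lieDeriv]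
  exact bianchiI_caseD_ricci_collineations_general
    ((hR.contDiffAt (hIopen.mem_nhds hp)).differentiableAt (by simp)) (hRpos _ hp) (hF _ hp)
    hRs hb hRic (fun q => by rw [hX0, Fin.sum_univ_three]; rfl) hXsp
end

section
/- Let I ⊆ ℝ be an open interval, R₀ : I → ℝ smooth and positive, F an antiderivative of √R₀ on I, and let a > 0 and C₃ ≠ 0 be constants. Define R₃(t) = C₃² cosh²(√a · F(t)/C₃). Then R₃ satisfies the separation equation (R₃(t)/√R₀(t)) · d/dt[ (d/dt ln R₃(t)) / (2√R₀(t)) ] = a everywhere on I. -/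
/-!
Let `D = f⁻¹ d/dt` with `f = F'`, which is differentiation with respect to `F`. For
`R = C² cosh² (κ F / C)` the bracket is `½ D (ln R) = (κ / C) tanh (κ F / C)`, and a second
application of `D` gives `(κ / C)² / cosh² (κ F / C) = κ² / R`, so that multiplying by `R`
leaves the constant `κ²`. The theorem is the case `f = √R₀`, `κ = √a`.
-/

theorem hasDerivAt_tanh (x : ℝ) : HasDerivAt Real.tanh ((Real.cosh x ^ 2)⁻¹) x := by
  have h := (Real.hasDerivAt_sinh x).div (Real.hasDerivAt_cosh x) (Real.cosh_pos x).ne'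
  have htanh : Real.sinh / Real.cosh = Real.tanh :=
    funext fun y => (Real.tanh_eq_sinh_div_cosh y).symm
  rwa [htanh, ← sq, ← sq, Real.cosh_sq_sub_sinh_sq, one_div] at h

theorem hasDerivAt_log_cosh (x : ℝ) :
    HasDerivAt (fun y => Real.log (Real.cosh y)) (Real.tanh x) x := by
  rw [Real.tanh_eq_sinh_div_cosh]
  exact (Real.hasDerivAt_cosh x).log (Real.cosh_pos x).ne'

theorem hasDerivAt_log_const_mul_cosh_sq {θ : ℝ → ℝ} {θ' t c : ℝ} (hc : c ≠ 0)
    (hθ : HasDerivAt θ θ' t) :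
    HasDerivAt (fun s => Real.log (c * Real.cosh (θ s) ^ 2)) (2 * (Real.tanh (θ t) * θ')) t := by
  have hlog : (fun s => Real.log (c * Real.cosh (θ s) ^ 2)) =
      fun s => Real.log c + 2 * Real.log (Real.cosh (θ s)) := by
    funext s
    rw [Real.log_mul hc (pow_pos (Real.cosh_pos _) 2).ne', Real.log_pow, Nat.cast_ofNat]
  rw [hlog]
  exact (((hasDerivAt_log_cosh (θ t)).comp t hθ).const_mul 2).const_add (Real.log c)

theorem caseCa1_separation_equation_general {I : Set ℝ} (hI : IsOpen I) {f F R : ℝ → ℝ}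
    (hf : ∀ t ∈ I, f t ≠ 0) (hF : ∀ t ∈ I, HasDerivAt F (f t) t) (κ : ℝ) {C : ℝ} (hC : C ≠ 0)
    (hR : ∀ t ∈ I, R t = C ^ 2 * Real.cosh (κ * F t / C) ^ 2) {t : ℝ} (ht : t ∈ I) :
    R t / f t * deriv (fun s => deriv (fun u => Real.log (R u)) s / (2 * f s)) t = κ ^ 2 := by
  have hθ : ∀ s ∈ I, HasDerivAt (fun u => κ * F u / C) (κ * f s / C) s := fun s hs =>
    ((hF s hs).const_mul κ).div_const C
  have hbracket : I.EqOn (fun s => deriv (fun u => Real.log (R u)) s / (2 * f s))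
      (fun s => κ / C * Real.tanh (κ * F s / C)) := by
    intro s hs
    have hlog : I.EqOn (fun u => Real.log (R u))
        (fun u => Real.log (C ^ 2 * Real.cosh (κ * F u / C) ^ 2)) := fun u hu =>
      congrArg Real.log (hR u hu)
    have hfs := hf s hs
    simp only [hlog.deriv hI hs,
      (hasDerivAt_log_const_mul_cosh_sq (pow_ne_zero 2 hC) (hθ s hs)).deriv]
    field_simp
  have hderiv : HasDerivAt (fun s => κ / C * Real.tanh (κ * F s / C))
      (κ / C * ((Real.cosh (κ * F t / C) ^ 2)⁻¹ * (κ * f t / C))) t :=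
    ((hasDerivAt_tanh _).comp t (hθ t ht)).const_mul (κ / C)
  have hcosh : Real.cosh (κ * F t / C) ≠ 0 := (Real.cosh_pos _).ne'
  have hft := hf t ht
  rw [hbracket.deriv hI ht, hderiv.deriv, hR t ht]
  field_simp

/-- The Case Ca₁ spatial Ricci component `R₃(t) = C₃² cosh²(√a F(t)/C₃)` (with `F' = √R₀`,
`R₀ > 0`, `a > 0`, `C₃ ≠ 0`) satisfies the separated Ricci-collineation integrability
condition `(R₃/√R₀) · d/dt[(d/dt ln R₃)/(2√R₀)] = a` on `I`. -/
theorem caseCa1_separation_equation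
    (I : Set ℝ) (hIopen : IsOpen I) (hIconn : I.OrdConnected)
    (R₀ : ℝ → ℝ) (hR : ContDiffOn ℝ (⊤ : ℕ∞) R₀ I) (hRpos : ∀ t ∈ I, 0 < R₀ t)
    (F : ℝ → ℝ) (hF : ∀ t ∈ I, HasDerivAt F (Real.sqrt (R₀ t)) t)
    (a C₃ : ℝ) (ha : 0 < a) (hC₃ : C₃ ≠ 0)
    (R₃ : ℝ → ℝ)
    (hR₃ : ∀ t, R₃ t = C₃ ^ 2 * (Real.cosh (Real.sqrt a * F t / C₃)) ^ 2) :
    ∀ t ∈ I,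
      (R₃ t / Real.sqrt (R₀ t)) *
        deriv (fun s => deriv (fun u => Real.log (R₃ u)) s / (2 * Real.sqrt (R₀ s))) t
        = a := fun t ht => by
  rw [caseCa1_separation_equation_general hIopen (fun s hs => (Real.sqrt_pos.2 (hRpos s hs)).ne')
    hF (Real.sqrt a) hC₃ (fun s _ => hR₃ s) ht, Real.sq_sqrt ha.le]
end

section
/- Let A₁, A₂, A₃ be arbitrary smooth positive functions of t and δ any real constant. Set u = (−1,0,0,0) and h(t,x,y,z) = diag(0, A₁(t)², A₂(t)², A₃(t)²). Then the vector field Z with components (0, δ·x, δ·y, δ·z) satisfies L_Z u = 0 and L_Z h = 2δ h. Hence every diagonal Bianchi I space-time with comoving fluid admits a kinematic self-similarity of the zeroth kind. -/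
/-- Lie derivative of a covector field `u` along the vector field `X`:
`(L_X u)_a = Σ_c X^c ∂_c u_a + Σ_c u_c ∂_a X^c`. -/
noncomputable def lieDerivCov (X : (Fin 4 → ℝ) → Fin 4 → ℝ)
    (u : (Fin 4 → ℝ) → Fin 4 → ℝ) (p : Fin 4 → ℝ) : Fin 4 → ℝ :=
  fun a =>
    (∑ c, X p c * pderiv4 c (fun q => u q a) p)
      + (∑ c, u p c * pderiv4 a (fun q => X q c) p)

/-!
Along a linear field `X = Σ_c w_c x^c ∂_c`, both Lie derivatives are a directional derivative of the
components plus a multiple of the components: the multiplier is `w_a` for a covector and `w_a + w_b`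
for a (0,2)-tensor. If `w_0 = 0`, then `X` is tangent to the slices of constant time, so the
directional derivative of a component depending only on `t` vanishes. For `w = (0, δ, δ, δ)` the
multiplier is `0` on `dt` and `2δ` on each purely spatial component of a tensor.
-/

theorem differentiable_diagonal_apply {𝕜 E n : Type*} [NontriviallyNormedField 𝕜]
    [NormedAddCommGroup E] [NormedSpace 𝕜 E] [DecidableEq n] {d : E → n → 𝕜}
    (hd : ∀ i, Differentiable 𝕜 fun x => d x i) (i j : n) :
    Differentiable 𝕜 fun x => Matrix.diagonal (d x) i j := by
  by_cases hij : i = j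
  · simpa [hij] using hd j
  · simp [hij]

theorem fderiv_comp_coord_apply {n : ℕ} {g : ℝ → ℝ} {p : Fin n → ℝ} {i : Fin n}
    (hg : DifferentiableAt ℝ g (p i)) (v : Fin n → ℝ) :
    fderiv ℝ (fun q => g (q i)) p v = deriv g (p i) * v i := by
  have hderiv : HasFDerivAt (fun q : Fin n → ℝ => g (q i))
      (deriv g (p i) • (ContinuousLinearMap.proj i : (Fin n → ℝ) →L[ℝ] ℝ)) p :=
    hg.hasDerivAt.comp_hasFDerivAt p (hasFDerivAt_apply i p)
  simp [hderiv.fderiv]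

/-- The linear vector field `Σ_c w_c x^c ∂_c` that dilates the coordinate `x^c` at rate `w_c`.
The paper's `Z` is the case of weights `(0, δ, δ, δ)`. -/
def dilationField (w : Fin 4 → ℝ) (p : Fin 4 → ℝ) : Fin 4 → ℝ :=
  w * p

theorem dilationField_apply (w p : Fin 4 → ℝ) (c : Fin 4) : dilationField w p c = w c * p c :=
  rfl

theorem sum_mul_pderiv4 (v : Fin 4 → ℝ) (f : (Fin 4 → ℝ) → ℝ) (p : Fin 4 → ℝ) :
    ∑ c, v c * pderiv4 c f p = fderiv ℝ f p v := by
  conv_rhs => rw [pi_eq_sum_univ' v, map_sum]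
  simp only [pderiv4, map_smul, smul_eq_mul]

theorem pderiv4_dilationField (a c : Fin 4) (w p : Fin 4 → ℝ) :
    pderiv4 a (fun q => dilationField w q c) p = if c = a then w c else 0 := by
  have hderiv : HasFDerivAt (fun q => dilationField w q c)
      (w c • (ContinuousLinearMap.proj c : (Fin 4 → ℝ) →L[ℝ] ℝ)) p :=
    (hasFDerivAt_apply c p).const_mul (w c)
  simp [pderiv4, hderiv.fderiv, Pi.single_apply]

theorem lieDerivCov_dilationField_apply (w : Fin 4 → ℝ) (u : (Fin 4 → ℝ) → Fin 4 → ℝ)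
    (p : Fin 4 → ℝ) (a : Fin 4) :
    lieDerivCov (dilationField w) u p a =
      fderiv ℝ (fun q => u q a) p (dilationField w p) + w a * u p a := by
  simp [lieDerivCov, sum_mul_pderiv4, pderiv4_dilationField, mul_comm]

theorem lieDerivT_dilationField_apply (w : Fin 4 → ℝ)
    (T : (Fin 4 → ℝ) → Matrix (Fin 4) (Fin 4) ℝ) (p : Fin 4 → ℝ) (a b : Fin 4) :
    lieDerivT (dilationField w) T p a b =
      fderiv ℝ (fun q => T q a b) p (dilationField w p) + (w a + w b) * T p a b := by
  simp only [lieDerivT, Matrix.of_apply, sum_mul_pderiv4, pderiv4_dilationField, mul_ite,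
    mul_zero, Finset.sum_ite_eq', Finset.mem_univ, if_true]
  ring

section TimeDependent

variable {w : Fin 4 → ℝ} (hw : w 0 = 0)
include hw

theorem fderiv_comp_time_dilationField {g : ℝ → ℝ} {p : Fin 4 → ℝ}
    (hg : DifferentiableAt ℝ g (p 0)) :
    fderiv ℝ (fun q : Fin 4 → ℝ => g (q 0)) p (dilationField w p) = 0 := by
  rw [fderiv_comp_coord_apply hg, dilationField_apply, hw, zero_mul, mul_zero]

theorem lieDerivCov_dilationField_comp_time {ω : ℝ → Fin 4 → ℝ} {p : Fin 4 → ℝ}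
    (hω : ∀ a, DifferentiableAt ℝ (fun t => ω t a) (p 0)) :
    lieDerivCov (dilationField w) (fun q => ω (q 0)) p = w * ω (p 0) := by
  ext a
  rw [lieDerivCov_dilationField_apply, fderiv_comp_time_dilationField hw (hω a), zero_add,
    Pi.mul_apply]

theorem lieDerivT_dilationField_comp_time {G : ℝ → Matrix (Fin 4) (Fin 4) ℝ} {p : Fin 4 → ℝ}
    (hG : ∀ a b, DifferentiableAt ℝ (fun t => G t a b) (p 0)) :
    lieDerivT (dilationField w) (fun q => G (q 0)) p =
      Matrix.of fun a b => (w a + w b) * G (p 0) a b := by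
  ext a b
  rw [lieDerivT_dilationField_apply, fderiv_comp_time_dilationField hw (hG a b), zero_add,
    Matrix.of_apply]

end TimeDependent

theorem dilationField_spatial (δ : ℝ) (p : Fin 4 → ℝ) :
    dilationField ![0, δ, δ, δ] p = ![0, δ * p 1, δ * p 2, δ * p 3] := by
  ext c
  fin_cases c <;> simp [dilationField]

theorem spatialWeight_add_mul {M : Matrix (Fin 4) (Fin 4) ℝ} (hrow : ∀ b, M 0 b = 0)
    (hcol : ∀ a, M a 0 = 0) (δ : ℝ) (a b : Fin 4) :
    ((![0, δ, δ, δ] : Fin 4 → ℝ) a + (![0, δ, δ, δ] : Fin 4 → ℝ) b) * M a b = 2 * δ * M a b := by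
  fin_cases a <;> fin_cases b <;> simp [hrow, hcol, two_mul]

theorem bianchiI_zeroth_kind_KSS_general
    (δ : ℝ)
    (G : ℝ → Matrix (Fin 4) (Fin 4) ℝ) (hG : ∀ a b, Differentiable ℝ fun t => G t a b)
    (hrow : ∀ t b, G t 0 b = 0) (hcol : ∀ t a, G t a 0 = 0)
    (u : (Fin 4 → ℝ) → Fin 4 → ℝ) (hu : ∀ p, u p = ![-1, 0, 0, 0])
    (h : (Fin 4 → ℝ) → Matrix (Fin 4) (Fin 4) ℝ) (hh : ∀ p, h p = G (p 0))
    (Z : (Fin 4 → ℝ) → Fin 4 → ℝ) (hZ : ∀ p, Z p = ![0, δ * p 1, δ * p 2, δ * p 3])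
    (p : Fin 4 → ℝ) :
    lieDerivCov Z u p = 0 ∧ lieDerivT Z h p = (2 * δ) • h p := by
  obtain rfl : Z = dilationField ![0, δ, δ, δ] :=
    funext fun q => (hZ q).trans (dilationField_spatial δ q).symm
  obtain rfl : u = fun _ => ![-1, 0, 0, 0] := funext hu
  obtain rfl : h = fun q => G (q 0) := funext hh
  constructor
  · rw [lieDerivCov_dilationField_comp_time (ω := fun _ => ![-1, 0, 0, 0]) rfl
      fun _ => differentiableAt_const _]
    ext a
    fin_cases a <;> simp
  · rw [lieDerivT_dilationField_comp_time rfl fun a b => hG a b (p 0)]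
    exact Matrix.ext (spatialWeight_add_mul (hrow (p 0)) (hcol (p 0)) δ)

/-- The projection tensor `h = diag(0, A₁², A₂², A₃²)` of a diagonal Bianchi I metric as a function
of `t`, with the time direction kept as a zero row and column. -/
def bianchiIProjection (A : Fin 3 → ℝ → ℝ) (t : ℝ) : Matrix (Fin 4) (Fin 4) ℝ :=
  Matrix.diagonal ![0, A 0 t ^ 2, A 1 t ^ 2, A 2 t ^ 2]

theorem bianchiIProjection_zero_left (A : Fin 3 → ℝ → ℝ) (t : ℝ) (b : Fin 4) :
    bianchiIProjection A t 0 b = 0 := by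
  simp [bianchiIProjection, Matrix.diagonal_apply]

theorem bianchiIProjection_zero_right (A : Fin 3 → ℝ → ℝ) (t : ℝ) (a : Fin 4) :
    bianchiIProjection A t a 0 = 0 := by
  simp +contextual [bianchiIProjection, Matrix.diagonal_apply]

theorem differentiable_bianchiIProjection_apply {A : Fin 3 → ℝ → ℝ}
    (hA : ∀ μ, Differentiable ℝ (A μ)) (a b : Fin 4) :
    Differentiable ℝ fun t => bianchiIProjection A t a b := by
  refine differentiable_diagonal_apply (fun c => ?_) a b
  fin_cases c
  exacts [differentiable_const 0, (hA 0).pow 2, (hA 1).pow 2, (hA 2).pow 2]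

/-- Every diagonal Bianchi I space-time with comoving fluid admits the zeroth-kind
kinematic self-similarity `Z = δ(x∂_x + y∂_y + z∂_z)`: `L_Z u = 0` and `L_Z h = 2δ h`,
where `u = (-1,0,0,0)` and `h = diag(0, A₁², A₂², A₃²)` for arbitrary smooth positive
metric functions `A₁, A₂, A₃` of `t`. -/
theorem bianchiI_zeroth_kind_KSS
    (δ : ℝ)
    (A : Fin 3 → ℝ → ℝ) (hA : ∀ μ : Fin 3, ContDiff ℝ (⊤ : ℕ∞) (A μ))
    (hApos : ∀ (μ : Fin 3) (t : ℝ), 0 < A μ t)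
    (u : (Fin 4 → ℝ) → Fin 4 → ℝ) (hu : ∀ p : Fin 4 → ℝ, u p = ![(-1 : ℝ), 0, 0, 0])
    (h : (Fin 4 → ℝ) → Matrix (Fin 4) (Fin 4) ℝ)
    (hh : ∀ p : Fin 4 → ℝ,
      h p = Matrix.diagonal ![(0 : ℝ), (A 0 (p 0)) ^ 2, (A 1 (p 0)) ^ 2, (A 2 (p 0)) ^ 2])
    (Z : (Fin 4 → ℝ) → Fin 4 → ℝ)
    (hZ : ∀ p : Fin 4 → ℝ, Z p = ![(0 : ℝ), δ * p 1, δ * p 2, δ * p 3]) :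
    ∀ p : Fin 4 → ℝ, lieDerivCov Z u p = 0 ∧ lieDerivT Z h p = (2 * δ) • h p := by
  exact bianchiI_zeroth_kind_KSS_general δ (bianchiIProjection A)
    (differentiable_bianchiIProjection_apply fun μ => (hA μ).differentiable (by simp))
    (bianchiIProjection_zero_left A) (bianchiIProjection_zero_right A) u hu h hh Z hZ
end

section
/- Let a, δ, α, β be constants with α ≠ 0, let I be an open interval on which α t + β > 0, and let A : I → ℝ be smooth and positive satisfying a + (α t + β)·A'(t)/A(t) = δ on I. Then there exists a constant C > 0 such that A(t) = C·(α t + β)^{(δ−a)/α} for all t ∈ I. Consequently, the only Bianchi I space-times with comoving fluid which admit a kinematic self-similarity of the second kind are the Kasner-type space-times, whose metric functions are powers of (α t + β). -/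
/-!
On `I` the condition says that `A'/A = (δ - a) / (αt + β)`, which is also the logarithmic derivative
of `(αt + β)^((δ - a)/α)`. Nonvanishing functions with equal logarithmic derivatives on an
interval are proportional.
-/

open Set

theorem logDeriv_fun_rpow_const {u : ℝ → ℝ} {t : ℝ} (p : ℝ) (hu : DifferentiableAt ℝ u t)
    (hpos : 0 < u t) : logDeriv (fun s ↦ u s ^ p) t = p * logDeriv u t := by
  have hpow : u t ^ p ≠ 0 := (Real.rpow_pos_of_pos hpos p).ne'
  rw [logDeriv_apply, logDeriv_apply, (hu.hasDerivAt.rpow_const (.inl hpos.ne')).deriv,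
    Real.rpow_sub_one hpos.ne']
  field_simp

theorem logDeriv_const_mul_add_const {𝕜 : Type*} [NontriviallyNormedField 𝕜] (α β t : 𝕜) :
    logDeriv (fun s ↦ α * s + β) t = α / (α * t + β) := by
  simp [logDeriv_apply]

theorem logDeriv_eqOn_const_mul_logDeriv_iff {s : Set ℝ} {f u : ℝ → ℝ} {p : ℝ} (hs : IsOpen s)
    (hsc : IsPreconnected s) (hf : DifferentiableOn ℝ f s) (hu : DifferentiableOn ℝ u s)
    (hf₀ : ∀ t ∈ s, f t ≠ 0) (hpos : ∀ t ∈ s, 0 < u t) :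
    EqOn (logDeriv f) (fun t ↦ p * logDeriv u t) s ↔
      ∃ C : ℝ, C ≠ 0 ∧ EqOn f (fun t ↦ C * u t ^ p) s := by
  have hlog : EqOn (logDeriv fun t ↦ u t ^ p) (fun t ↦ p * logDeriv u t) s := fun t ht ↦
    logDeriv_fun_rpow_const p (hu.differentiableAt (hs.mem_nhds ht)) (hpos t ht)
  have hiff := logDeriv_eqOn_iff hf (hu.rpow_const fun t ht ↦ .inl (hpos t ht).ne') hs hsc
    (fun t ht ↦ (Real.rpow_pos_of_pos (hpos t ht) p).ne') hf₀
  exact ⟨fun h ↦ hiff.1 (h.trans hlog.symm), fun h ↦ (hiff.2 h).trans hlog⟩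

theorem add_mul_div_eq_iff_div_eq {K : Type*} [Field K] {a δ u x y : K} (hu : u ≠ 0) :
    a + u * x / y = δ ↔ x / y = (δ - a) / u := by
  rw [eq_div_iff hu, eq_sub_iff_add_eq', mul_div_assoc, mul_comm u]

theorem KSS_second_kind_power_law_solution_general
    (a δ α β : ℝ) (hα : α ≠ 0)
    (I : Set ℝ) (hIopen : IsOpen I) (hIconn : I.OrdConnected)
    (hpos : ∀ t ∈ I, 0 < α * t + β)
    (A : ℝ → ℝ) (hA : DifferentiableOn ℝ A I) (hApos : ∀ t ∈ I, 0 < A t)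
    (hKSS : ∀ t ∈ I, a + (α * t + β) * deriv A t / A t = δ) :
    ∃ C : ℝ, 0 < C ∧ ∀ t ∈ I, A t = C * (α * t + β) ^ ((δ - a) / α) := by
  have hlog : EqOn (logDeriv A)
      (fun t ↦ (δ - a) / α * logDeriv (fun s ↦ α * s + β) t) I := fun t ht ↦ by
    calc logDeriv A t = (δ - a) / (α * t + β) :=
          (add_mul_div_eq_iff_div_eq (hpos t ht).ne').1 (hKSS t ht)
      _ = (δ - a) / α * logDeriv (fun s ↦ α * s + β) t := by
          rw [logDeriv_const_mul_add_const, div_mul_div_cancel₀ hα]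
  obtain ⟨C, hC, hAC⟩ := (logDeriv_eqOn_const_mul_logDeriv_iff hIopen hIconn.isPreconnected hA
    (by fun_prop) (fun t ht ↦ (hApos t ht).ne') hpos).1 hlog
  -- `A > 0` forces `C > 0` unless `I` is empty; taking `|C|` covers both cases.
  refine ⟨|C|, abs_pos.2 hC, fun t ht ↦ ?_⟩
  rw [← abs_of_pos (hApos t ht), hAC ht, abs_mul, abs_of_pos (Real.rpow_pos_of_pos (hpos t ht) _)]

/-- Solution of the second-kind (α ≠ 0) kinematic self-similarity condition
`a + (αt + β) A'/A = δ` on an interval where `αt + β > 0`: the metric function is the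
power law `A(t) = C (αt + β)^{(δ-a)/α}`, i.e. the space-time is of Kasner type. -/
theorem KSS_second_kind_power_law_solution
    (a δ α β : ℝ) (hα : α ≠ 0)
    (I : Set ℝ) (hIopen : IsOpen I) (hIconn : I.OrdConnected)
    (hpos : ∀ t ∈ I, 0 < α * t + β)
    (A : ℝ → ℝ) (hA : ContDiffOn ℝ (⊤ : ℕ∞) A I) (hApos : ∀ t ∈ I, 0 < A t)
    (hKSS : ∀ t ∈ I, a + (α * t + β) * deriv A t / A t = δ) :
    ∃ C : ℝ, 0 < C ∧ ∀ t ∈ I, A t = C * (α * t + β) ^ ((δ - a) / α) :=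
  KSS_second_kind_power_law_solution_general a δ α β hα I hIopen hIconn hpos A
    (hA.differentiableOn (by simp)) hApos hKSS
end
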